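/- Let n be an odd positive integer and let Ψ be the function Ψ(x,y) = (H_n(x) − H_n(y)) exp(−(x²+y²)/2) (equal to √2·Φ^{3π/4}_n up to sign). Then there exist (n−1)/2 pairwise disjoint subsets C_1, …, C_{(n−1)/2} of ℝ², each homeomorphic to the circle S¹ and each disjoint from the diagonal except at its crossing points, such that the nodal set N(Ψ) equals the union of the diagonal {(x,x) : x ∈ ℝ} and C_1 ∪ ⋯ ∪ C_{(n−1)/2}; moreover the union of the C_k meets the diagonal exactly in the n−1 points (t_{n−1,i}, t_{n−1,i}), 1 ≤ i ≤ n−1, and meets the antidiagonal {x + y = 0} exactly in the n−1 points (t_{n,i}, −t_{n,i}) with t_{n,i} ≠ 0. -/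

import Mathlib

/-- The physicist's Hermite polynomials: `H 0 = 1`, `H 1 = 2X`,
`H (n+2) = 2X · H (n+1) - 2(n+1) · H n`. -/
noncomputable def H : ℕ → Polynomial ℝ
  | 0 => 1
  | 1 => Polynomial.C 2 * Polynomial.X
  | n + 2 => Polynomial.C 2 * Polynomial.X * H (n + 1) - Polynomial.C (2 * (n + 1) : ℝ) * H n

/-- The function `Ψ(x,y) = (H_n(x) - H_n(y)) e^{-(x²+y²)/2}`, equal up to a constant
to `Φ^{3π/4}_n`. -/
noncomputable def Psi (n : ℕ) : ℝ × ℝ → ℝ := fun p =>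
  ((H n).eval p.1 - (H n).eval p.2) * Real.exp (-(p.1 ^ 2 + p.2 ^ 2) / 2)

/-!
For an odd polynomial `p` write `p x - p y = (x - y) F (x, y)`. The critical points
`0 < c₀ < ⋯ < c_{m-1}` of `p` carry increasing values of `|p|`, so just below each `c_i`, and also
far out, there is a radius `e` at which `|p|` exceeds all its values on `(-e, e)` and is increasing.
On the boundary of the square `[-e, e]²`, which is a sphere for the sup norm, `F` then has the sign
of `p e`, and these signs alternate. On a ray from the origin `F` is an even polynomial of degree at
most `2m`, hence has exactly one zero between consecutive squares. Radial projection therefore maps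
the zero set of `F` in each square annulus homeomorphically onto a sphere.

For `p = H_n` the increase of `|p|` along the critical points comes from Sonin's function
`2n H_n² + (H_n')²`, whose derivative is `4x (H_n')²`.
-/

open Set Metric Polynomial Filter Topology

section RadialSets

variable {E E' : Type*} [NormedAddCommGroup E] [NormedSpace ℝ E]
  [NormedAddCommGroup E'] [NormedSpace ℝ E']

theorem nonempty_homeomorph_sphere_of_isCompact {K : Set E} (hK : IsCompact K) (h0 : (0 : E) ∉ K)
    (hray : ∀ u : E, ‖u‖ = 1 → ∃! r : ℝ, 0 < r ∧ r • u ∈ K) :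
    Nonempty (K ≃ₜ sphere (0 : E) 1) := by
  have hne (q : K) : (q : E) ≠ 0 := ne_of_mem_of_not_mem q.2 h0
  have hunit (q : K) : ‖‖(q : E)‖⁻¹ • (q : E)‖ = 1 := norm_smul_inv_norm (𝕜 := ℝ) (hne q)
  have hpolar (q : K) : ‖(q : E)‖ • ‖(q : E)‖⁻¹ • (q : E) = q :=
    smul_inv_smul₀ (norm_ne_zero_iff.2 (hne q)) _
  let f (q : K) : sphere (0 : E) 1 := ⟨‖(q : E)‖⁻¹ • q, by simpa using hunit q⟩
  have hcont : Continuous f :=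
    ((continuous_subtype_val.norm.inv₀ fun q => norm_ne_zero_iff.2 (hne q)).smul
      continuous_subtype_val).subtype_mk _
  have hinj : Function.Injective f := by
    intro q q' h
    have hdir : ‖(q : E)‖⁻¹ • (q : E) = ‖(q' : E)‖⁻¹ • (q' : E) := congrArg Subtype.val h
    have hnorm : ‖(q : E)‖ = ‖(q' : E)‖ := (hray _ (hunit q)).unique
      ⟨norm_pos_iff.2 (hne q), (hpolar q).symm ▸ q.2⟩
      ⟨norm_pos_iff.2 (hne q'), by rw [hdir, hpolar q']; exact q'.2⟩
    rw [← Subtype.coe_inj, ← hpolar q, ← hpolar q', hdir, hnorm]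
  have hsurj : Function.Surjective f := by
    rintro ⟨u, hu⟩
    rw [mem_sphere_zero_iff_norm] at hu
    obtain ⟨r, ⟨hr, hru⟩, -⟩ := hray u hu
    refine ⟨⟨r • u, hru⟩, Subtype.ext ?_⟩
    simp [f, norm_smul, hu, abs_of_pos hr, hr.ne']
  have := isCompact_iff_compactSpace.1 hK
  exact ⟨Continuous.homeoOfEquivCompactToT2 (f := Equiv.ofBijective f ⟨hinj, hsurj⟩) hcont⟩

theorem nonempty_sphere_homeomorph_sphere [ProperSpace E'] (L : E ≃L[ℝ] E') :
    Nonempty (sphere (0 : E) 1 ≃ₜ sphere (0 : E') 1) := by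
  obtain ⟨f⟩ : Nonempty (L ⁻¹' sphere 0 1 ≃ₜ sphere (0 : E) 1) := by
    refine nonempty_homeomorph_sphere_of_isCompact
      (L.toHomeomorph.isCompact_preimage.2 (isCompact_sphere 0 1)) (by simp) fun u hu => ?_
    have hLu : 0 < ‖L u‖ := by
      rw [norm_pos_iff, Ne, map_eq_zero_iff L L.injective]
      exact ne_zero_of_norm_ne_zero (hu ▸ one_ne_zero)
    refine ⟨‖L u‖⁻¹, by simp [norm_smul, hLu, hLu.ne'], fun r ⟨hr, hru⟩ => ?_⟩
    rw [mem_preimage, map_smul, mem_sphere_zero_iff_norm, norm_smul, Real.norm_of_nonneg hr.le]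
      at hru
    exact eq_inv_of_mul_eq_one_left hru
  exact ⟨f.symm.trans (L.toHomeomorph.sets rfl)⟩

theorem nonempty_sphere_prod_homeomorph_sphere_euclideanSpace :
    Nonempty (sphere (0 : ℝ × ℝ) 1 ≃ₜ sphere (0 : EuclideanSpace ℝ (Fin 2)) 1) :=
  nonempty_sphere_homeomorph_sphere
    ((ContinuousLinearEquiv.finTwoArrow ℝ ℝ).symm.trans (EuclideanSpace.equiv (Fin 2) ℝ).symm)

end RadialSets

section Alternation

theorem mul_pos_of_forall_mem_Icc_ne_zero {g : ℝ → ℝ} {a b : ℝ} (hab : a ≤ b)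
    (hg : ContinuousOn g (Icc a b)) (hne : ∀ x ∈ Icc a b, g x ≠ 0) : 0 < g a * g b := by
  by_contra! h
  have hmem : (0 : ℝ) ∈ uIcc (g a) (g b) := by
    rw [mem_uIcc]
    exact (mul_nonpos_iff.1 h).symm.imp_right And.symm
  rw [← uIcc_of_le hab] at hg hne
  obtain ⟨x, hx, hx0⟩ := intermediate_value_uIcc hg hmem
  exact hne x hx hx0

variable {m : ℕ} {e : Fin (m + 1) → ℝ}

theorem index_eq_of_mem_Ioo_of_mem_Icc (he : StrictMono e) {i j : Fin m} {x : ℝ}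
    (hi : x ∈ Ioo (e i.castSucc) (e i.succ)) (hj : x ∈ Icc (e j.castSucc) (e j.succ)) : i = j := by
  have hij := he.lt_iff_lt.1 (hi.1.trans_le hj.2)
  have hji := he.lt_iff_lt.1 (hj.1.trans_lt hi.2)
  rw [Fin.castSucc_lt_succ_iff] at hij hji
  exact le_antisymm hij hji

theorem exists_zeros_eq_range_of_alternating {g : ℝ → ℝ} {s : Set ℝ} (hs : s.OrdConnected)
    (hg : ContinuousOn g s) (he : StrictMono e) (hes : ∀ k, e k ∈ s)
    (halt : ∀ i : Fin m, g (e i.castSucc) * g (e i.succ) < 0)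
    (hcard : {x | x ∈ s ∧ g x = 0}.encard ≤ m) :
    ∃ z : Fin m → ℝ, (∀ i, z i ∈ Ioo (e i.castSucc) (e i.succ)) ∧
      {x | x ∈ s ∧ g x = 0} = range z := by
  have hzero (i : Fin m) : ∃ x ∈ Ioo (e i.castSucc) (e i.succ), g x = 0 := by
    by_contra! hne
    refine (halt i).not_gt (mul_pos_of_forall_mem_Icc_ne_zero (he i.castSucc_lt_succ).le
      (hg.mono (hs.out (hes _) (hes _))) fun x hx => ?_)
    rcases hx.1.eq_or_lt with rfl | hl
    · exact left_ne_zero_of_mul (halt i).ne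
    rcases hx.2.eq_or_lt with rfl | hr
    · exact right_ne_zero_of_mul (halt i).ne
    exact hne x ⟨hl, hr⟩
  choose z hz hz0 using hzero
  have hinj : Function.Injective z := fun i j hij =>
    index_eq_of_mem_Ioo_of_mem_Icc he (hz i) (hij ▸ Ioo_subset_Icc_self (hz j))
  have hsub : range z ⊆ {x | x ∈ s ∧ g x = 0} := by
    rintro _ ⟨i, rfl⟩
    exact ⟨hs.out (hes _) (hes _) (Ioo_subset_Icc_self (hz i)), hz0 i⟩
  refine ⟨z, hz, ((finite_range z).eq_of_subset_of_encard_le hsub ?_).symm⟩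
  rwa [← image_univ, hinj.encard_image, encard_univ, ENat.card_eq_coe_fintype_card,
    Fintype.card_fin]

variable {E : Type*} [NormedAddCommGroup E] [NormedSpace ℝ E] {F : E → ℝ}

/-- `F` changes sign along every ray from the origin between consecutive spheres of radii
`e 0 < ⋯ < e m`, and vanishes at most `m` times on it. -/
structure IsRadiallyAlternating (F : E → ℝ) (e : Fin (m + 1) → ℝ) : Prop where
  continuous : Continuous F
  strictMono : StrictMono e
  pos : ∀ k, 0 < e k
  alternating : ∀ (i : Fin m) (u : E), ‖u‖ = 1 → F (e i.castSucc • u) * F (e i.succ • u) < 0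
  encard_le : ∀ u : E, ‖u‖ = 1 → {r : ℝ | r ∈ Ioi 0 ∧ F (r • u) = 0}.encard ≤ m

/-- The zeros of `F` in the closed shell between the `i`-th and the `(i+1)`-st sphere. -/
def zeroShell (F : E → ℝ) (e : Fin (m + 1) → ℝ) (i : Fin m) : Set E :=
  {q | F q = 0 ∧ ‖q‖ ∈ Icc (e i.castSucc) (e i.succ)}

namespace IsRadiallyAlternating

theorem exists_zeros_eq_range (h : IsRadiallyAlternating F e) {u : E} (hu : ‖u‖ = 1) :
    ∃ z : Fin m → ℝ, (∀ i, z i ∈ Ioo (e i.castSucc) (e i.succ)) ∧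
      {r : ℝ | r ∈ Ioi 0 ∧ F (r • u) = 0} = range z :=
  exists_zeros_eq_range_of_alternating ordConnected_Ioi
    (h.continuous.comp (continuous_id.smul continuous_const)).continuousOn h.strictMono h.pos
    (fun i => h.alternating i u hu) (h.encard_le u hu)

theorem exists_norm_mem_Ioo (h : IsRadiallyAlternating F e) {q : E} (hq : q ≠ 0) (hFq : F q = 0) :
    ∃ i : Fin m, ‖q‖ ∈ Ioo (e i.castSucc) (e i.succ) := by
  obtain ⟨z, hz, hrange⟩ := h.exists_zeros_eq_range (norm_smul_inv_norm (𝕜 := ℝ) hq)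
  have hmem : ‖q‖ ∈ range z := by
    rw [← hrange]
    refine ⟨norm_pos_iff.2 hq, ?_⟩
    simpa [smul_inv_smul₀ (norm_ne_zero_iff.2 hq)] using hFq
  obtain ⟨i, hi⟩ := hmem
  exact ⟨i, hi ▸ hz i⟩

theorem ne_zero_of_mem_zeroShell (h : IsRadiallyAlternating F e) {i : Fin m} {q : E}
    (hq : q ∈ zeroShell F e i) : q ≠ 0 :=
  norm_pos_iff.1 ((h.pos _).trans_le hq.2.1)

theorem pairwise_disjoint_zeroShell (h : IsRadiallyAlternating F e) :
    Pairwise (Function.onFun Disjoint (zeroShell F e)) := by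
  intro i j hij
  refine disjoint_left.2 fun q hi hj => hij ?_
  obtain ⟨k, hk⟩ := h.exists_norm_mem_Ioo (h.ne_zero_of_mem_zeroShell hi) hi.1
  exact (index_eq_of_mem_Ioo_of_mem_Icc h.strictMono hk hi.2).symm.trans
    (index_eq_of_mem_Ioo_of_mem_Icc h.strictMono hk hj.2)

theorem mem_iUnion_zeroShell_iff (h : IsRadiallyAlternating F e) {q : E} :
    q ∈ ⋃ i, zeroShell F e i ↔ q ≠ 0 ∧ F q = 0 := by
  refine ⟨fun hq => ?_, fun ⟨hq, hFq⟩ => ?_⟩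
  · obtain ⟨i, hi⟩ := mem_iUnion.1 hq
    exact ⟨h.ne_zero_of_mem_zeroShell hi, hi.1⟩
  · obtain ⟨i, hi⟩ := h.exists_norm_mem_Ioo hq hFq
    exact mem_iUnion.2 ⟨i, hFq, Ioo_subset_Icc_self hi⟩

theorem nonempty_zeroShell_homeomorph_sphere [ProperSpace E] (h : IsRadiallyAlternating F e)
    (i : Fin m) : Nonempty (zeroShell F e i ≃ₜ sphere (0 : E) 1) := by
  have hcompact : IsCompact (zeroShell F e i) :=
    (isCompact_closedBall (0 : E) (e i.succ)).of_isClosed_subset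
      ((isClosed_singleton.preimage h.continuous).inter (isClosed_Icc.preimage continuous_norm))
      fun q hq => mem_closedBall_zero_iff.2 hq.2.2
  refine nonempty_homeomorph_sphere_of_isCompact hcompact
    (fun h0 => h.ne_zero_of_mem_zeroShell h0 rfl) fun u hu => ?_
  obtain ⟨z, hz, hrange⟩ := h.exists_zeros_eq_range hu
  have hnorm {r : ℝ} (hr : 0 < r) : ‖r • u‖ = r := by
    rw [norm_smul, hu, mul_one, Real.norm_of_nonneg hr.le]
  have hzi : z i ∈ {r : ℝ | r ∈ Ioi 0 ∧ F (r • u) = 0} := hrange ▸ mem_range_self i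
  refine ⟨z i, ⟨hzi.1, hzi.2, ?_⟩, ?_⟩
  · rw [hnorm hzi.1]
    exact Ioo_subset_Icc_self (hz i)
  · rintro r ⟨hr, hru, hri⟩
    rw [hnorm hr] at hri
    obtain ⟨j, rfl⟩ : r ∈ range z := hrange ▸ ⟨hr, hru⟩
    rw [index_eq_of_mem_Ioo_of_mem_Icc h.strictMono (hz j) hri]

end IsRadiallyAlternating

end Alternation

section RealRoots

theorem ncard_eq_two_mul_ncard_inter_Ioi_add {α : Type*} [AddCommGroup α] [LinearOrder α]
    [IsOrderedAddMonoid α] {s : Set α} (hs : s.Finite) (hneg : ∀ x ∈ s, -x ∈ s) :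
    s.ncard = 2 * (s ∩ Ioi 0).ncard + (s ∩ {0}).ncard := by
  have hsplit : s = (s ∩ Ioi 0 ∪ Neg.neg '' (s ∩ Ioi 0)) ∪ s ∩ {0} := by
    have hiff (x : α) : -x ∈ s ↔ x ∈ s := ⟨fun h => by simpa using hneg _ h, hneg x⟩
    ext x
    simp only [image_neg_eq_neg, mem_union, mem_inter_iff, Set.mem_neg, mem_Ioi, mem_singleton_iff,
      hiff, Left.neg_pos_iff, ← and_or_left]
    exact (and_iff_left (by grind)).symm
  have hpos : Disjoint (s ∩ Ioi 0) (Neg.neg '' (s ∩ Ioi 0)) := by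
    rw [disjoint_left]
    rintro _ ⟨-, hx⟩ ⟨y, ⟨-, hy⟩, rfl⟩
    exact lt_asymm (mem_Ioi.1 hy) (neg_pos.1 hx)
  have hzero : Disjoint (s ∩ Ioi 0 ∪ Neg.neg '' (s ∩ Ioi 0)) (s ∩ {0}) := by
    rw [disjoint_left]
    rintro x (⟨-, hx⟩ | ⟨y, ⟨-, hy⟩, rfl⟩) ⟨-, h0⟩
    · exact hx.ne' h0
    · exact hy.ne' (neg_eq_zero.1 h0)
  have hfin := hs.inter_of_left (Ioi (0 : α))
  conv_lhs => rw [hsplit]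
  rw [ncard_union_eq hzero (hfin.union (hfin.image _)) (hs.inter_of_left _),
    ncard_union_eq hpos hfin (hfin.image _), ncard_image_of_injective _ neg_injective]
  ring

variable {R : Type*} [CommRing R] [IsDomain R] {p : R[X]}

theorem ncard_setOf_eval_eq_zero (hp : p ≠ 0) [DecidableEq R] :
    {x | p.eval x = 0}.ncard = p.roots.toFinset.card := by
  rw [← ncard_coe_finset]
  congr 1
  ext x
  simp [hp]

theorem ncard_setOf_eval_eq_zero_le_natDegree (hp : p ≠ 0) :
    {x | p.eval x = 0}.ncard ≤ p.natDegree := by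
  classical
  rw [ncard_setOf_eval_eq_zero hp]
  exact (Multiset.toFinset_card_le _).trans p.card_roots'

theorem nodup_roots_of_natDegree_le_ncard (hp : p ≠ 0)
    (hcard : p.natDegree ≤ {x | p.eval x = 0}.ncard) : p.roots.Nodup := by
  classical
  rw [ncard_setOf_eval_eq_zero hp] at hcard
  exact Multiset.toFinset_card_eq_card_iff_nodup.1
    ((Multiset.toFinset_card_le _).antisymm (p.card_roots'.trans hcard))

theorem encard_setOf_pos_eval_eq_zero_le {R : Type*} [CommRing R] [LinearOrder R]
    [IsStrictOrderedRing R] {p : R[X]} (hp : p ≠ 0) (heven : ∀ x, p.eval (-x) = p.eval x) {m : ℕ}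
    (hdeg : p.natDegree ≤ 2 * m) : {x | x ∈ Ioi 0 ∧ p.eval x = 0}.encard ≤ m := by
  have hfin : {x | p.eval x = 0}.Finite := finite_setOfPred_isRoot hp
  have hsplit := ncard_eq_two_mul_ncard_inter_Ioi_add hfin fun x hx => (heven x).trans hx
  have hle := ncard_setOf_eval_eq_zero_le_natDegree hp
  rw [show {x | x ∈ Ioi 0 ∧ p.eval x = 0} = {x | p.eval x = 0} ∩ Ioi 0 from inter_comm _ _,
    encard_le_coe_iff_finite_ncard_le]
  exact ⟨hfin.inter_of_left _, by omega⟩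

theorem eval_mul_eval_neg_of_nodup_roots {p : ℝ[X]} (hp : p.roots.Nodup) {a b c : ℝ}
    (hc : c ∈ Ioo a b) (hroot : ∀ x ∈ Icc a b, p.eval x = 0 ↔ x = c) :
    p.eval a * p.eval b < 0 := by
  have hpc : p.eval c = 0 := (hroot c (Ioo_subset_Icc_self hc)).2 rfl
  have hpa : p.eval a ≠ 0 := fun h =>
    hc.1.ne ((hroot a (left_mem_Icc.2 (hc.1.trans hc.2).le)).1 h)
  obtain ⟨q, rfl⟩ := dvd_iff_isRoot.2 hpc
  have hpq : (X - C c) * q ≠ 0 := by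
    intro h
    simp [h] at hpa
  have hqc : q.eval c ≠ 0 := by
    rw [roots_mul hpq, roots_X_sub_C, Multiset.singleton_add, Multiset.nodup_cons,
      mem_roots (right_ne_zero_of_mul hpq)] at hp
    exact hp.1
  have hq : 0 < q.eval a * q.eval b := by
    refine mul_pos_of_forall_mem_Icc_ne_zero (hc.1.trans hc.2).le q.continuousOn fun x hx h => ?_
    obtain rfl := (hroot x hx).1 (by simp [h])
    exact hqc h
  have hlin : (a - c) * (b - c) < 0 := mul_neg_of_neg_of_pos (sub_neg.2 hc.1) (sub_pos.2 hc.2)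
  simp only [eval_mul, eval_sub, eval_X, eval_C]
  nlinarith

theorem strictMonoOn_of_derivative_nonneg {p : ℝ[X]} (hp : derivative p ≠ 0) {s : Set ℝ}
    (hs : Convex ℝ s) (hnonneg : ∀ x ∈ interior s, 0 ≤ (derivative p).eval x) :
    StrictMonoOn p.eval s := by
  have hmono : MonotoneOn p.eval s :=
    monotoneOn_of_deriv_nonneg hs p.continuousOn p.differentiable.differentiableOn
      fun x hx => by simpa using hnonneg x hx
  intro a ha b hb hab
  refine (hmono ha hb hab.le).lt_of_ne fun heq => hp ?_
  have hconst : p = C (p.eval a) := by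
    refine eq_of_infinite_eval_eq _ _ ((Ioo_infinite hab).mono fun x hx => ?_)
    have hxs : x ∈ s := hs.ordConnected.out ha hb (Ioo_subset_Icc_self hx)
    rw [mem_ofPred_eq, eval_C]
    exact le_antisymm ((hmono hxs hb hx.2.le).trans heq.ge) (hmono ha hxs hx.1.le)
  rw [hconst, derivative_C]

end RealRoots

section DividedDifference

/-- The divided difference `(p x - p y) / (x - y)` of `p` at `q = (x, y)`, written out monomial by
monomial so that it is a polynomial in `x` and `y` and makes sense on the diagonal. -/
noncomputable def divDiff {R : Type*} [CommSemiring R] (p : R[X]) (q : R × R) : R :=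
  p.sum fun n a => a * ∑ i ∈ Finset.range n, q.1 ^ i * q.2 ^ (n - 1 - i)

theorem sub_mul_divDiff {R : Type*} [CommRing R] (p : R[X]) (x y : R) :
    (x - y) * divDiff p (x, y) = p.eval x - p.eval y := by
  rw [divDiff, eval_eq_sum, eval_eq_sum, Polynomial.sum, Polynomial.sum, Polynomial.sum,
    ← Finset.sum_sub_distrib, Finset.mul_sum]
  refine Finset.sum_congr rfl fun n _ => ?_
  rw [← mul_sub, ← (Commute.all x y).mul_geom_sum₂ n]
  ring

theorem divDiff_self {R : Type*} [CommSemiring R] (p : R[X]) (x : R) :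
    divDiff p (x, x) = (derivative p).eval x := by
  rw [divDiff, derivative_eval]
  refine Finset.sum_congr rfl fun n _ => ?_
  simp only [geom_sum₂_self, mul_assoc]

theorem divDiff_swap {R : Type*} [CommRing R] [IsDomain R] (p : R[X]) (x y : R) :
    divDiff p (x, y) = divDiff p (y, x) := by
  rcases eq_or_ne x y with rfl | hxy
  · rfl
  · refine mul_left_cancel₀ (sub_ne_zero.2 hxy) ?_
    linear_combination sub_mul_divDiff p x y + sub_mul_divDiff p y x

theorem continuous_divDiff {R : Type*} [CommSemiring R] [TopologicalSpace R]
    [IsTopologicalSemiring R] (p : R[X]) : Continuous (divDiff p) := by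
  unfold divDiff Polynomial.sum
  fun_prop

/-- The restriction `r ↦ divDiff p (r • u)` as a polynomial in `r`. -/
noncomputable def divDiffAlong {R : Type*} [CommSemiring R] (p : R[X]) (u : R × R) : R[X] :=
  p.sum fun n a => monomial (n - 1) (a * ∑ i ∈ Finset.range n, u.1 ^ i * u.2 ^ (n - 1 - i))

theorem eval_divDiffAlong {R : Type*} [CommSemiring R] (p : R[X]) (u : R × R) (r : R) :
    (divDiffAlong p u).eval r = divDiff p (r • u) := by
  rw [divDiffAlong, divDiff, Polynomial.sum, Polynomial.sum, eval_finsetSum]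
  refine Finset.sum_congr rfl fun n _ => ?_
  rw [eval_monomial, mul_assoc, Finset.sum_mul]
  congr 1
  refine Finset.sum_congr rfl fun i hi => ?_
  rw [Finset.mem_range] at hi
  rw [← Nat.add_sub_of_le (Nat.le_sub_one_of_lt hi), Nat.add_sub_cancel_left, pow_add]
  simp only [Prod.smul_fst, Prod.smul_snd, smul_eq_mul, mul_pow]
  ring

theorem natDegree_divDiffAlong_le {R : Type*} [CommSemiring R] (p : R[X]) (u : R × R) :
    (divDiffAlong p u).natDegree ≤ p.natDegree - 1 :=
  natDegree_sum_le_of_forall_le _ _ fun n hn =>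
    (natDegree_monomial_le _).trans (Nat.sub_le_sub_right (le_natDegree_of_mem_supp n hn) 1)

end DividedDifference

section OddPolynomial

variable {R : Type*} [CommRing R] [IsDomain R] [Infinite R] {p : R[X]}

theorem eval_derivative_neg_of_odd (hodd : ∀ x, p.eval (-x) = -p.eval x) (x : R) :
    (derivative p).eval (-x) = (derivative p).eval x := by
  have hcomp : p.comp (-X) = -p := Polynomial.funext fun y => by simp [hodd]
  have := congrArg (fun q => (derivative q).eval x) hcomp
  simpa [derivative_comp] using this

theorem divDiff_neg_of_odd (hodd : ∀ x, p.eval (-x) = -p.eval x) (q : R × R) :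
    divDiff p (-q) = divDiff p q := by
  obtain ⟨x, y⟩ := q
  rw [Prod.neg_mk]
  rcases eq_or_ne x y with rfl | hxy
  · rw [divDiff_self, divDiff_self, eval_derivative_neg_of_odd hodd]
  · refine mul_left_cancel₀ (sub_ne_zero.2 hxy) ?_
    have := sub_mul_divDiff p (-x) (-y)
    rw [hodd, hodd] at this
    linear_combination -this - sub_mul_divDiff p x y

end OddPolynomial

section OrderedOddPolynomial

variable {R : Type*} [CommRing R] [LinearOrder R] [IsStrictOrderedRing R] {p : R[X]}

theorem mul_divDiff_neg_of_odd (hodd : ∀ x, p.eval (-x) = -p.eval x) (x : R) :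
    x * divDiff p (x, -x) = p.eval x := by
  have := sub_mul_divDiff p x (-x)
  rw [hodd] at this
  refine mul_left_cancel₀ (two_ne_zero (α := R)) ?_
  linear_combination this

theorem encard_setOf_pos_divDiff_smul_eq_zero_le (hodd : ∀ x, p.eval (-x) = -p.eval x) {m : ℕ}
    (hdeg : p.natDegree ≤ 2 * m + 1) {u : R × R} {r : R} (hr : divDiff p (r • u) ≠ 0) :
    {s : R | s ∈ Ioi 0 ∧ divDiff p (s • u) = 0}.encard ≤ m := by
  simp only [← eval_divDiffAlong] at hr ⊢
  refine encard_setOf_pos_eval_eq_zero_le (fun h => hr (by rw [h, eval_zero])) (fun s => ?_)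
    ((natDegree_divDiffAlong_le p u).trans (by omega))
  rw [eval_divDiffAlong, eval_divDiffAlong, neg_smul, divDiff_neg_of_odd hodd]

end OrderedOddPolynomial

section RecordRadius

variable {p : ℝ[X]}

/-- `r > 0` is a record radius of `p` if `|p|` is increasing at `r` and larger there than anywhere
on `(-r, r)`. -/
structure IsRecordRadius (p : ℝ[X]) (r : ℝ) : Prop where
  pos : 0 < r
  eval_mul_eval_derivative_pos : 0 < p.eval r * (derivative p).eval r
  sq_lt_sq : ∀ s, |s| < r → p.eval s ^ 2 < p.eval r ^ 2

theorem isRecordRadius_of_derivative_ne_zero (hodd : ∀ x, p.eval (-x) = -p.eval x) {a r : ℝ}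
    (ha : 0 ≤ a) (har : a < r) (hmax : ∀ s, |s| < a → p.eval s ^ 2 < p.eval a ^ 2)
    (hderiv : ∀ x ∈ Ioc a r, (derivative p).eval x ≠ 0) (hsq : p.eval a ^ 2 < p.eval r ^ 2) :
    IsRecordRadius p r := by
  set d := (derivative p).eval r
  have hr : d ≠ 0 := hderiv r (right_mem_Ioc.2 har)
  have hmono : StrictMonoOn (fun x => d * p.eval x) (Icc a r) := by
    refine strictMonoOn_of_deriv_pos (convex_Icc a r) (by fun_prop) fun x hx => ?_
    rw [interior_Icc] at hx
    rw [deriv_const_mul _ p.differentiableAt, Polynomial.deriv, mul_comm]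
    exact mul_pos_of_forall_mem_Icc_ne_zero hx.2.le (derivative p).continuousOn
      fun y hy => hderiv y ⟨hx.1.trans_le hy.1, hy.2⟩
  have hlt := hmono (left_mem_Icc.2 har.le) (right_mem_Icc.2 har.le) har
  have habs : |d * p.eval a| < |d * p.eval r| := by
    rw [abs_mul, abs_mul]
    exact mul_lt_mul_of_pos_left (sq_lt_sq.1 hsq) (abs_pos.2 hr)
  have hpos : 0 < d * p.eval r := by
    by_contra! h
    rw [abs_of_nonpos h, abs_of_nonpos (hlt.le.trans h), neg_lt_neg_iff] at habs
    exact lt_asymm hlt habs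
  rw [abs_of_pos hpos] at habs
  refine ⟨ha.trans_lt har, by rwa [mul_comm], fun s hs => ?_⟩
  rcases lt_or_ge |s| a with hsa | hsa
  · exact (hmax s hsa).trans hsq
  have heven : p.eval s ^ 2 = p.eval |s| ^ 2 := by
    rcases abs_choice s with h | h <;> simp [h, hodd]
  have hle := hmono.monotoneOn (left_mem_Icc.2 har.le) ⟨hsa, hs.le⟩ hsa
  have hs' := sq_lt_sq' ((neg_lt_of_abs_lt habs).trans_le hle)
    (hmono ⟨hsa, hs.le⟩ (right_mem_Icc.2 har.le) hs)
  rw [mul_pow, mul_pow] at hs'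
  exact heven ▸ lt_of_mul_lt_mul_left hs' (sq_nonneg d)

theorem exists_isRecordRadius_mem_Ioo (hodd : ∀ x, p.eval (-x) = -p.eval x) {a b : ℝ}
    (ha : 0 ≤ a) (hab : a < b) (hmax : ∀ s, |s| < a → p.eval s ^ 2 < p.eval a ^ 2)
    (hderiv : ∀ x ∈ Ioo a b, (derivative p).eval x ≠ 0) (hsq : p.eval a ^ 2 < p.eval b ^ 2) :
    ∃ r ∈ Ioo a b, IsRecordRadius p r := by
  have hnear : ∀ᶠ x in 𝓝[<] b, p.eval a ^ 2 < p.eval x ^ 2 :=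
    (p.continuous.pow 2).continuousWithinAt.eventually (lt_mem_nhds hsq)
  obtain ⟨r, hr, har, hrb⟩ := (hnear.and (Ioo_mem_nhdsLT hab)).exists
  exact ⟨r, ⟨har, hrb⟩, isRecordRadius_of_derivative_ne_zero hodd ha har hmax
    (fun x hx => hderiv x ⟨hx.1, hx.2.trans_lt hrb⟩) hr⟩

theorem exists_isRecordRadius_gt (hodd : ∀ x, p.eval (-x) = -p.eval x) (hdeg : 0 < p.natDegree)
    {a : ℝ} (ha : 0 ≤ a) (hmax : ∀ s, |s| < a → p.eval s ^ 2 < p.eval a ^ 2)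
    (hderiv : ∀ x > a, (derivative p).eval x ≠ 0) : ∃ r > a, IsRecordRadius p r := by
  have hlim := p.abs_tendsto_atTop (natDegree_pos_iff_degree_pos.1 hdeg)
  obtain ⟨b, hb, hab⟩ :=
    ((hlim.eventually_gt_atTop |p.eval a|).and (eventually_gt_atTop a)).exists
  obtain ⟨r, hr, hrec⟩ := exists_isRecordRadius_mem_Ioo hodd ha hab hmax
    (fun x hx => hderiv x hx.1) (sq_lt_sq.2 hb)
  exact ⟨r, hr.1, hrec⟩

theorem strictMono_finCons {α : Type*} [Preorder α] {n : ℕ} {a : α} {c : Fin n → α}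
    (hc : StrictMono c) (ha : ∀ j, a < c j) : StrictMono (Fin.cons a c : Fin (n + 1) → α) := by
  intro i j hij
  cases j using Fin.cases with
  | zero => exact absurd hij (Fin.not_lt_zero i)
  | succ j =>
    cases i using Fin.cases with
    | zero => exact ha j
    | succ i => exact hc (Fin.succ_lt_succ_iff.1 hij)

theorem exists_interlacing_isRecordRadius {m : ℕ} {c : Fin m → ℝ}
    (hodd : ∀ x, p.eval (-x) = -p.eval x) (hdeg : 0 < p.natDegree) (hc : StrictMono c)
    (hcrit : {x | 0 < x ∧ (derivative p).eval x = 0} = range c)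
    (hgrow : ∀ x, (derivative p).eval x = 0 → ∀ s, |s| < |x| → p.eval s ^ 2 < p.eval x ^ 2) :
    ∃ e : Fin (m + 1) → ℝ, (∀ k, IsRecordRadius p (e k)) ∧
      ∀ i, c i ∈ Ioo (e i.castSucc) (e i.succ) := by
  let a : Fin (m + 1) → ℝ := Fin.cons 0 c
  have hc' (j : Fin m) : 0 < c j ∧ (derivative p).eval (c j) = 0 :=
    hcrit.ge (mem_range_self j)
  have ha : StrictMono a := strictMono_finCons hc fun j => (hc' j).1
  have ha0 (k) : 0 ≤ a k := ha.monotone (Fin.zero_le k)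
  have hmax (k s) : |s| < a k → p.eval s ^ 2 < p.eval (a k) ^ 2 := by
    cases k using Fin.cases with
    | zero => exact fun hs => absurd hs (abs_nonneg s).not_gt
    | succ j => exact fun hs => hgrow _ (hc' j).2 s (hs.trans_le (le_abs_self _))
  have hroot {x : ℝ} (hx : 0 < x) (h : (derivative p).eval x = 0) : ∃ j : Fin m, a j.succ = x :=
    hcrit.le ⟨hx, h⟩
  have hbelow (i : Fin m) : ∃ r ∈ Ioo (a i.castSucc) (a i.succ), IsRecordRadius p r := by
    have hlt := ha i.castSucc_lt_succ
    refine exists_isRecordRadius_mem_Ioo hodd (ha0 _) hlt (hmax _) (fun x hx hx0 => ?_)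
      (hgrow _ (hc' i).2 _ ?_)
    · obtain ⟨j, rfl⟩ := hroot ((ha0 _).trans_lt hx.1) hx0
      rw [mem_Ioo, ha.lt_iff_lt, ha.lt_iff_lt, Fin.castSucc_lt_succ_iff, Fin.succ_lt_succ_iff] at hx
      exact hx.1.not_gt hx.2
    · rw [abs_of_nonneg (ha0 _)]
      exact hlt.trans_le (le_abs_self _)
  have habove : ∃ r > a (Fin.last m), IsRecordRadius p r := by
    refine exists_isRecordRadius_gt hodd hdeg (ha0 _) (hmax _) fun x hx hx0 => ?_
    obtain ⟨j, rfl⟩ := hroot ((ha0 _).trans_lt hx) hx0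
    exact (ha.lt_iff_lt.1 hx).not_ge (Fin.le_last _)
  choose r hr hrec using hbelow
  obtain ⟨R, hR, hRrec⟩ := habove
  have hgt : ∀ k, a k < (Fin.snoc r R : Fin (m + 1) → ℝ) k :=
    Fin.lastCases (by simpa) (by simpa using fun i => (hr i).1)
  have hlt (i : Fin m) : r i < c i := (hr i).2
  exact ⟨Fin.snoc r R, Fin.lastCases (by simpa) (by simpa),
    fun i => ⟨by simpa using hlt i, hgt i.succ⟩⟩

theorem IsRecordRadius.eval_mul_divDiff_pos_of_abs_le (hodd : ∀ x, p.eval (-x) = -p.eval x)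
    {r y : ℝ} (h : IsRecordRadius p r) (hy : |y| ≤ r) : 0 < p.eval r * divDiff p (r, y) := by
  rcases (abs_le.1 hy).2.eq_or_lt with rfl | hyr
  · rw [divDiff_self]
    exact h.eval_mul_eval_derivative_pos
  have hpos : 0 < p.eval r * (p.eval r - p.eval y) := by
    rcases hy.lt_or_eq with hlt | heq
    · nlinarith only [h.sq_lt_sq y hlt, sq_nonneg (p.eval r - p.eval y)]
    · obtain rfl : y = -r := (eq_or_eq_neg_of_abs_eq heq).resolve_left hyr.ne
      rw [hodd, sub_neg_eq_add, ← two_mul, mul_left_comm]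
      have hr : p.eval r ≠ 0 := left_ne_zero_of_mul h.eval_mul_eval_derivative_pos.ne'
      exact mul_pos two_pos (mul_self_pos.2 hr)
  rw [← sub_mul_divDiff, mul_left_comm] at hpos
  exact pos_of_mul_pos_right hpos (sub_pos.2 hyr).le

theorem IsRecordRadius.eval_mul_divDiff_pos (hodd : ∀ x, p.eval (-x) = -p.eval x) {r : ℝ}
    (h : IsRecordRadius p r) {q : ℝ × ℝ} (hq : ‖q‖ = r) : 0 < p.eval r * divDiff p q := by
  obtain ⟨x, y⟩ := q
  wlog hxy : |y| ≤ |x| generalizing x y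
  · rw [divDiff_swap]
    exact this y x (by rwa [Prod.norm_mk, max_comm]) (le_of_not_ge hxy)
  rw [Prod.norm_mk, Real.norm_eq_abs, Real.norm_eq_abs, max_eq_left hxy] at hq
  rw [hq] at hxy
  rcases eq_or_eq_neg_of_abs_eq hq with rfl | rfl
  · exact h.eval_mul_divDiff_pos_of_abs_le hodd hxy
  · rw [← neg_neg y, ← Prod.neg_mk, divDiff_neg_of_odd hodd]
    exact h.eval_mul_divDiff_pos_of_abs_le hodd (by rwa [abs_neg])

theorem isRadiallyAlternating_divDiff {m : ℕ} {e : Fin (m + 1) → ℝ}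
    (hodd : ∀ x, p.eval (-x) = -p.eval x) (hdeg : p.natDegree ≤ 2 * m + 1) (he : StrictMono e)
    (hrec : ∀ k, IsRecordRadius p (e k))
    (halt : ∀ i : Fin m, p.eval (e i.castSucc) * p.eval (e i.succ) < 0) :
    IsRadiallyAlternating (divDiff p) e := by
  have hsign (k) {u : ℝ × ℝ} (hu : ‖u‖ = 1) : 0 < p.eval (e k) * divDiff p (e k • u) :=
    (hrec k).eval_mul_divDiff_pos hodd
      (by rw [norm_smul, hu, mul_one, Real.norm_of_nonneg (hrec k).pos.le])
  refine ⟨continuous_divDiff p, he, fun k => (hrec k).pos, fun i u hu => ?_, fun u hu =>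
    encard_setOf_pos_divDiff_smul_eq_zero_le hodd hdeg (right_ne_zero_of_mul (hsign 0 hu).ne')⟩
  have hprod := mul_pos (hsign i.castSucc hu) (hsign i.succ hu)
  rw [mul_mul_mul_comm] at hprod
  exact neg_of_mul_pos_right hprod (halt i).le

theorem exists_isRadiallyAlternating_divDiff {m : ℕ} (hodd : ∀ x, p.eval (-x) = -p.eval x)
    (hdeg : p.natDegree = 2 * m + 1) {c : Fin m → ℝ} (hc : StrictMono c)
    (hcrit : {x | 0 < x ∧ (derivative p).eval x = 0} = range c)
    (hnodup : (derivative p).roots.Nodup)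
    (hgrow : ∀ x, (derivative p).eval x = 0 → ∀ s, |s| < |x| → p.eval s ^ 2 < p.eval x ^ 2) :
    ∃ e : Fin (m + 1) → ℝ, IsRadiallyAlternating (divDiff p) e := by
  obtain ⟨e, hrec, hce⟩ := exists_interlacing_isRecordRadius hodd (by omega) hc hcrit hgrow
  have he : StrictMono e := Fin.strictMono_iff_lt_succ.2 fun i => (hce i).1.trans (hce i).2
  refine ⟨e, isRadiallyAlternating_divDiff hodd hdeg.le he hrec fun i => ?_⟩
  have hderiv := eval_mul_eval_neg_of_nodup_roots hnodup (hce i) fun x hx => by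
    refine ⟨fun h0 => ?_, fun h => h ▸ (hcrit.ge (mem_range_self i)).2⟩
    obtain ⟨j, rfl⟩ := hcrit.le ⟨(hrec _).pos.trans_le hx.1, h0⟩
    rw [index_eq_of_mem_Ioo_of_mem_Icc he (hce j) hx]
  have hprod := mul_pos (hrec i.castSucc).eval_mul_eval_derivative_pos
    (hrec i.succ).eval_mul_eval_derivative_pos
  rw [mul_mul_mul_comm] at hprod
  exact neg_of_mul_pos_left hprod hderiv.le

theorem exists_strictMono_range_eq_setOf_pos_derivative_eq_zero {m : ℕ}
    (hodd : ∀ x, p.eval (-x) = -p.eval x) (hp : derivative p ≠ 0)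
    (hcard : {x | (derivative p).eval x = 0}.ncard = 2 * m) :
    (derivative p).eval 0 ≠ 0 ∧ ∃ c : Fin m → ℝ, StrictMono c ∧
      {x | 0 < x ∧ (derivative p).eval x = 0} = range c := by
  have hfin : {x | (derivative p).eval x = 0}.Finite := finite_setOfPred_isRoot hp
  have hsplit := ncard_eq_two_mul_ncard_inter_Ioi_add hfin fun x hx =>
    (eval_derivative_neg_of_odd hodd x).trans hx
  have hle := ncard_le_ncard (inter_subset_right (s := {x | (derivative p).eval x = 0}) (t := {0}))
  rw [ncard_singleton] at hle
  refine ⟨fun h0 => ?_, ?_⟩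
  · have hzero : {x | (derivative p).eval x = 0} ∩ {0} = {0} :=
      inter_eq_self_of_subset_right (singleton_subset_iff.2 h0)
    rw [hzero, ncard_singleton] at hsplit
    omega
  · have hpos := hfin.inter_of_left (Ioi 0)
    have hm : hpos.toFinset.card = m := by
      rw [← ncard_eq_toFinset_card _ hpos]
      omega
    refine ⟨hpos.toFinset.orderEmbOfFin hm, (hpos.toFinset.orderEmbOfFin hm).strictMono, ?_⟩
    rw [Finset.range_orderEmbOfFin, hpos.coe_toFinset]
    exact inter_comm _ _

end RecordRadius

theorem nodal_set_of_Psi_general {m : ℕ} {p : ℝ[X]} (hodd : ∀ x, p.eval (-x) = -p.eval x)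
    (hdeg : p.natDegree = 2 * m + 1) (hcard : {x | (derivative p).eval x = 0}.ncard = 2 * m)
    (hgrow : ∀ x, (derivative p).eval x = 0 → ∀ s, |s| < |x| → p.eval s ^ 2 < p.eval x ^ 2) :
    ∃ C : Fin m → Set (ℝ × ℝ),
      Pairwise (Function.onFun Disjoint C) ∧
      (∀ k, Nonempty (C k ≃ₜ sphere (0 : EuclideanSpace ℝ (Fin 2)) 1)) ∧
      {q : ℝ × ℝ | p.eval q.1 = p.eval q.2} = {q | q.1 = q.2} ∪ (⋃ k, C k) ∧
      (⋃ k, C k) ∩ {q | q.1 = q.2} = {q | ∃ x, (derivative p).eval x = 0 ∧ q = (x, x)} ∧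
      (⋃ k, C k) ∩ {q | q.1 + q.2 = 0} = {q | ∃ x, x ≠ 0 ∧ p.eval x = 0 ∧ q = (x, -x)} := by
  have hdeg' : (derivative p).natDegree = 2 * m := by rw [natDegree_derivative, hdeg]; rfl
  have hp' : derivative p ≠ 0 := derivative_ne_zero.2 (by omega)
  obtain ⟨h0, c, hc, hcrit⟩ :=
    exists_strictMono_range_eq_setOf_pos_derivative_eq_zero hodd hp' hcard
  obtain ⟨e, he⟩ := exists_isRadiallyAlternating_divDiff hodd hdeg hc hcrit
    (nodup_roots_of_natDegree_le_ncard hp' (hdeg'.trans hcard.symm).le) hgrow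
  have hmem (q : ℝ × ℝ) : q ∈ ⋃ i, zeroShell (divDiff p) e i ↔ divDiff p q = 0 := by
    rw [he.mem_iUnion_zeroShell_iff]
    refine and_iff_right_of_imp ?_
    rintro hq rfl
    exact h0 ((divDiff_self p 0).symm.trans hq)
  refine ⟨zeroShell (divDiff p) e, he.pairwise_disjoint_zeroShell, fun k => ?_, ?_, ?_, ?_⟩
  · obtain ⟨f⟩ := he.nonempty_zeroShell_homeomorph_sphere k
    obtain ⟨g⟩ := nonempty_sphere_prod_homeomorph_sphere_euclideanSpace
    exact ⟨f.trans g⟩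
  · ext ⟨x, y⟩
    rw [mem_union, hmem, mem_ofPred_eq, ← sub_eq_zero, ← sub_mul_divDiff, mul_eq_zero, sub_eq_zero]
    rfl
  · ext ⟨x, y⟩
    rw [mem_inter_iff, hmem]
    constructor
    · rintro ⟨hq, rfl : x = y⟩
      exact ⟨x, divDiff_self p x ▸ hq, rfl⟩
    · rintro ⟨x, hx, ⟨⟩⟩
      exact ⟨(divDiff_self p x).trans hx, rfl⟩
  · ext ⟨x, y⟩
    rw [mem_inter_iff, hmem]
    constructor
    · rintro ⟨hq, hxy⟩
      obtain rfl : y = -x := eq_neg_of_add_eq_zero_right hxy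
      refine ⟨x, ?_, by rw [← mul_divDiff_neg_of_odd hodd, hq, mul_zero], rfl⟩
      rintro rfl
      exact h0 (by rwa [neg_zero, divDiff_self] at hq)
    · rintro ⟨x, hx, hpx, ⟨⟩⟩
      rw [← mul_divDiff_neg_of_odd hodd, mul_eq_zero] at hpx
      exact ⟨hpx.resolve_left hx, add_neg_cancel x⟩

section Hermite

theorem derivative_H_succ (n : ℕ) : derivative (H (n + 1)) = C (2 * (n + 1) : ℝ) * H n := by
  induction n using Nat.twoStepInduction with
  | zero => simp [H]
  | one =>
    simp only [H, derivative_sub, derivative_mul, derivative_C, derivative_X, derivative_one]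
    simp only [map_mul, map_add, map_ofNat, map_one, map_natCast]
    push_cast
    ring
  | more n ih ih' =>
    rw [H, derivative_sub, derivative_mul, derivative_C_mul, derivative_C_mul, derivative_X, ih,
      ih', H]
    simp only [map_mul, map_add, map_ofNat, map_one, map_natCast]
    push_cast
    ring

theorem H_succ (n : ℕ) : H (n + 1) = C 2 * X * H n - derivative (H n) := by
  cases n with
  | zero => simp [H]
  | succ n => rw [derivative_H_succ, H]

theorem derivative_derivative_H (n : ℕ) :
    derivative (derivative (H n)) = C 2 * X * derivative (H n) - C (2 * n : ℝ) * H n := by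
  have h := derivative_H_succ n
  rw [H_succ, derivative_sub, derivative_mul, derivative_C_mul, derivative_X] at h
  simp only [map_mul, map_add, map_one, map_ofNat, mul_one] at h ⊢
  linear_combination -h

theorem H_ne_zero (n : ℕ) : H n ≠ 0 := by
  induction n with
  | zero => exact one_ne_zero
  | succ n ih =>
    intro h
    have hderiv := derivative_H_succ n
    rw [h, derivative_zero] at hderiv
    exact mul_ne_zero (C_ne_zero.2 (by positivity)) ih hderiv.symm

theorem natDegree_H (n : ℕ) : (H n).natDegree = n := by
  induction n with
  | zero => exact natDegree_one
  | succ n ih =>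
    have hc : (2 * (n + 1) : ℝ) ≠ 0 := by positivity
    have hderiv : derivative (H (n + 1)) ≠ 0 := by
      rw [derivative_H_succ]
      exact mul_ne_zero (C_ne_zero.2 hc) (H_ne_zero n)
    have hdeg := congrArg natDegree (derivative_H_succ n)
    rw [natDegree_derivative, natDegree_C_mul hc, ih] at hdeg
    have := derivative_ne_zero.1 hderiv
    omega

theorem eval_neg_H (n : ℕ) (x : ℝ) : (H n).eval (-x) = (-1) ^ n * (H n).eval x := by
  induction n using Nat.twoStepInduction with
  | zero => simp [H]
  | one => simp [H]
  | more n ih ih' =>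
    simp only [H, eval_sub, eval_mul, eval_C, eval_X, ih, ih']
    ring

theorem sq_eval_abs_H (n : ℕ) (x : ℝ) : (H n).eval |x| ^ 2 = (H n).eval x ^ 2 := by
  rcases abs_choice x with h | h <;> rw [h]
  rw [eval_neg_H, mul_pow, pow_right_comm, neg_one_sq, one_pow, one_mul]

theorem eval_derivative_H_succ_eq_zero_iff (n : ℕ) (x : ℝ) :
    (derivative (H (n + 1))).eval x = 0 ↔ (H n).eval x = 0 := by
  rw [derivative_H_succ, eval_mul, eval_C]
  exact mul_eq_zero_iff_left (by positivity)

/-- Sonin's function `2n H_n² + (H_n')²`, which majorizes `2n H_n²` with equality at the critical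
points of `H_n`. -/
noncomputable def sonin (n : ℕ) : ℝ[X] := C (2 * n : ℝ) * H n ^ 2 + derivative (H n) ^ 2

theorem derivative_sonin (n : ℕ) : derivative (sonin n) = C 4 * X * derivative (H n) ^ 2 := by
  simp only [sonin, derivative_add, derivative_C_mul, derivative_pow, derivative_derivative_H]
  simp only [map_mul, map_ofNat, map_natCast]
  push_cast
  ring

theorem strictMonoOn_eval_sonin {n : ℕ} (hn : n ≠ 0) : StrictMonoOn (sonin n).eval (Ici 0) := by
  have hH : derivative (H n) ≠ 0 := derivative_ne_zero.2 ((natDegree_H n).symm ▸ hn)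
  refine strictMonoOn_of_derivative_nonneg ?_ (convex_Ici 0) fun x hx => ?_
  · rw [derivative_sonin]
    exact mul_ne_zero (mul_ne_zero (C_ne_zero.2 four_ne_zero) X_ne_zero) (pow_ne_zero 2 hH)
  · rw [interior_Ici, mem_Ioi] at hx
    simp only [derivative_sonin, eval_mul, eval_C, eval_X, eval_pow]
    positivity

theorem sq_eval_H_succ_lt_of_eval_H_eq_zero {n : ℕ} {x s : ℝ} (hx : (H n).eval x = 0)
    (hs : |s| < |x|) : (H (n + 1)).eval s ^ 2 < (H (n + 1)).eval x ^ 2 := by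
  have hx' : (derivative (H (n + 1))).eval |x| = 0 := by
    rw [eval_derivative_H_succ_eq_zero_iff, ← sq_eq_zero_iff, sq_eval_abs_H, hx, sq, zero_mul]
  have hlt := strictMonoOn_eval_sonin n.succ_ne_zero (abs_nonneg s) (abs_nonneg x) hs
  simp only [sonin, eval_add, eval_mul, eval_C, eval_pow, hx', sq_eval_abs_H] at hlt
  have hn : (0 : ℝ) < 2 * (n + 1 : ℕ) := by positivity
  refine lt_of_mul_lt_mul_left ?_ hn.le
  linarith [sq_nonneg ((derivative (H (n + 1))).eval |s|)]

end Hermite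

theorem Psi_eq_zero_iff (n : ℕ) (q : ℝ × ℝ) : Psi n q = 0 ↔ (H n).eval q.1 = (H n).eval q.2 := by
  rw [Psi, mul_eq_zero_iff_right (Real.exp_ne_zero _), sub_eq_zero]

open Real Set in
/-- **Proposition 4.1.** Let `n` be odd, with `t 0 < ⋯ < t (n-1)` the zeros of `H_n`
and `t' 0 < ⋯ < t' (n-2)` the zeros of `H_{n-1}`. The nodal set of
`Ψ(x,y) = (H_n(x) - H_n(y))e^{-(x²+y²)/2}` is the union of the diagonal `{x = y}`
and of `(n-1)/2` pairwise disjoint simple closed curves `C k`; the union of the `C k`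
meets the diagonal exactly at the `n-1` points `(t'_i, t'_i)` and the antidiagonal
`{x + y = 0}` exactly at the `n-1` points `(t_i, -t_i)` with `t_i ≠ 0`. -/
theorem nodal_set_of_Psi (n : ℕ) (hodd : Odd n) (hpos : 0 < n)
    (t : Fin n → ℝ) (htmono : StrictMono t)
    (htzero : ∀ x : ℝ, (H n).eval x = 0 ↔ ∃ i, x = t i)
    (t' : Fin (n - 1) → ℝ) (ht'mono : StrictMono t')
    (ht'zero : ∀ x : ℝ, (H (n - 1)).eval x = 0 ↔ ∃ i, x = t' i) :
    ∃ C : Fin ((n - 1) / 2) → Set (ℝ × ℝ),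
      Pairwise (Function.onFun Disjoint C) ∧
      (∀ k, Nonempty (C k ≃ₜ Metric.sphere (0 : EuclideanSpace ℝ (Fin 2)) 1)) ∧
      {p : ℝ × ℝ | Psi n p = 0} = {p : ℝ × ℝ | p.1 = p.2} ∪ (⋃ k, C k) ∧
      (⋃ k, C k) ∩ {p : ℝ × ℝ | p.1 = p.2} = {p : ℝ × ℝ | ∃ i, p = (t' i, t' i)} ∧
      (⋃ k, C k) ∩ {p : ℝ × ℝ | p.1 + p.2 = 0} =
        {p : ℝ × ℝ | ∃ i, t i ≠ 0 ∧ p = (t i, -(t i))} := by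
  obtain ⟨k, rfl⟩ := Nat.exists_eq_add_one.2 hpos
  have hk : 2 * ((k + 1 - 1) / 2) = k := by grind
  have hcrit (x : ℝ) : (derivative (H (k + 1))).eval x = 0 ↔ ∃ i, x = t' i :=
    (eval_derivative_H_succ_eq_zero_iff k x).trans (ht'zero x)
  have hrange : {x | (derivative (H (k + 1))).eval x = 0} = range t' :=
    ext fun x => (hcrit x).trans (exists_congr fun _ => eq_comm)
  obtain ⟨C, hdisj, hcircle, hnodal, hdiag, hanti⟩ := nodal_set_of_Psi_general
    (fun x => by rw [eval_neg_H, hodd.neg_one_pow, neg_one_mul])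
    (by rw [natDegree_H, hk])
    (by rw [hrange, ncard_range_of_injective ht'mono.injective, Nat.card_fin, hk]; rfl)
    fun x hx s => sq_eval_H_succ_lt_of_eval_H_eq_zero
      ((eval_derivative_H_succ_eq_zero_iff k x).1 hx)
  refine ⟨C, hdisj, hcircle, ?_, ?_, ?_⟩
  · simpa only [Psi_eq_zero_iff] using hnodal
  · rw [hdiag]
    simp only [hcrit]
    aesop
  · rw [hanti]
    simp only [htzero]
    aesop
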